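/- For a given finite alphabet A, there exist real positive constants μ and π (depending on the size of A) such that for every finite nonempty rich word w over A with n = |w|, the length of the UPS-factorization of w satisfies LUF(w) ≤ μ · n / e^{π√(ln n)}. -/

import Mathlib

/-- A finite word is a palindrome if it equals its reversal. -/
def IsPalindrome {A : Type*} (w : List A) : Prop := w.reverse = w

/-- A finite word `w` is rich if it contains `|w| + 1` distinct palindromic
factors, including the empty word. -/
def IsRichWord {A : Type*} (w : List A) : Prop :=
  {u : List A | u <:+: w ∧ IsPalindrome u}.ncard = w.length + 1

/-- `ws = [w_p, w_{p-1}, …, w_1]` is the UPS-factorization of `w`: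
the `w_i` are distinct nonempty palindromes, `w = w_p w_{p-1} ⋯ w_1`, and
each `w_i` is the longest palindromic suffix of `w_p w_{p-1} ⋯ w_i`. -/
def IsUPSFactorization {A : Type*} (w : List A) (ws : List (List A)) : Prop :=
  ws ≠ [] ∧ ws.Nodup ∧ (∀ u ∈ ws, u ≠ [] ∧ IsPalindrome u) ∧ w = ws.flatten ∧
    ∀ j (h : j < ws.length),
      ws.get ⟨j, h⟩ <:+ (ws.take (j + 1)).flatten ∧
        ∀ v : List A, v <:+ (ws.take (j + 1)).flatten → IsPalindrome v →
          v.length ≤ (ws.get ⟨j, h⟩).length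

/-!
Prepending a letter to a word creates at most one new palindromic factor, namely its longest
palindromic prefix; in a rich word it always creates one. If the new palindrome is longer than `m`,
reflecting it shows that the new prefix of length `m` has already occurred up to reversal; otherwise
one new palindrome of length at most `m` pays for that prefix and its reversal. Hence a rich word
and its reversal have together at most twice as many factors of length `m` as the word has
palindromic factors of length at most `m`. Since a palindrome is determined by its length and its
first half, the number `P m` of palindromic factors of length at most `m` satisfies
`P n ≤ (n + 1) * (2 * P ((n + 1) / 2))`, so `P (2 ^ k)` is at most a constant times
`2 ^ (3 * k ^ 2)`. A factorization of a word of length `n` into distinct palindromes has at most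
`P m` parts of length at most `m` and at most `n / m` longer ones; taking `m = 2 ^ k` with
`k = ⌊√(log n) / 3⌋` gives the bound.
-/

section

variable {A : Type*}

theorem IsPalindrome.drop_eq {u : List A} (hu : IsPalindrome u) (k : ℕ) :
    u.drop k = (u.take (u.length - k)).reverse := by
  rw [← List.drop_reverse, hu]

theorem IsPalindrome.eq_of_take_eq {u v : List A} (hu : IsPalindrome u) (hv : IsPalindrome v)
    (hlen : u.length = v.length) {k : ℕ} (hk : u.length ≤ 2 * k) (htake : u.take k = v.take k) :
    u = v := by
  have hshort : u.take (u.length - k) = v.take (u.length - k) := by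
    simpa only [List.take_take, min_eq_left (show u.length - k ≤ k by omega)] using
      congrArg (List.take (u.length - k)) htake
  rw [← List.take_append_drop k u, ← List.take_append_drop k v, hu.drop_eq, hv.drop_eq, ← hlen,
    htake, hshort]

theorem IsPalindrome.reverse_infix_of_prefix_cons {a : A} {x u v : List A} (hv : IsPalindrome v)
    (hvx : v <+: a :: x) (huv : u <+: v) (hlt : u.length < v.length) : u.reverse <:+: x := by
  have hsuffix : u.reverse <:+ v := by
    simpa only [show v.reverse = v from hv] using List.reverse_suffix.2 huv
  cases v with
  | nil => simp at hlt
  | cons b v =>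
    rcases List.suffix_cons_iff.1 hsuffix with h | h
    · have := congrArg List.length h
      rw [List.length_reverse] at this
      omega
    · exact h.isInfix.trans (List.cons_prefix_cons.1 hvx).2.isInfix

/-- The set of palindromic factors of `w`, including the empty word. -/
def palindromicFactors (w : List A) : Set (List A) :=
  {u | u <:+: w ∧ IsPalindrome u}

/-- The palindromic factors of `w` of length at most `m`. -/
def shortPalindromicFactors (w : List A) (m : ℕ) : Set (List A) :=
  {u ∈ palindromicFactors w | u.length ≤ m}

/-- The closure under reversal of the set of factors of `w` of length `m`. -/
def factorsUpToReversal (w : List A) (m : ℕ) : Set (List A) :=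
  {v | v.length = m ∧ (v <:+: w ∨ v.reverse <:+: w)}

theorem finite_setOf_infix (w : List A) : {u | u <:+: w}.Finite :=
  w.sublists.finite_toSet.subset fun _ hu ↦ List.mem_sublists.2 hu.sublist

theorem finite_palindromicFactors (w : List A) : (palindromicFactors w).Finite :=
  (finite_setOf_infix w).subset fun _ hu ↦ hu.1

theorem finite_shortPalindromicFactors (w : List A) (m : ℕ) :
    (shortPalindromicFactors w m).Finite :=
  (finite_palindromicFactors w).subset fun _ hu ↦ hu.1

theorem finite_factorsUpToReversal (w : List A) (m : ℕ) : (factorsUpToReversal w m).Finite :=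
  ((finite_setOf_infix w).union ((finite_setOf_infix w).image List.reverse)).subset
    fun v hv ↦ hv.2.imp id fun h ↦ ⟨v.reverse, h, v.reverse_reverse⟩

theorem shortPalindromicFactors_mono (w : List A) {m n : ℕ} (hmn : m ≤ n) :
    shortPalindromicFactors w m ⊆ shortPalindromicFactors w n :=
  fun _ hu ↦ ⟨hu.1, hu.2.trans hmn⟩

theorem shortPalindromicFactors_subset_cons (a : A) (x : List A) (m : ℕ) :
    shortPalindromicFactors x m ⊆ shortPalindromicFactors (a :: x) m :=
  fun _ hu ↦ ⟨⟨List.infix_cons hu.1.1, hu.1.2⟩, hu.2⟩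

theorem prefix_of_mem_palindromicFactors_cons_sdiff {a : A} {x u : List A}
    (hu : u ∈ palindromicFactors (a :: x) \ palindromicFactors x) : u <+: a :: x :=
  (List.infix_cons_iff.1 hu.1.1).resolve_right fun h ↦ hu.2 ⟨h, hu.1.2⟩

theorem subsingleton_palindromicFactors_cons_sdiff (a : A) (x : List A) :
    (palindromicFactors (a :: x) \ palindromicFactors x).Subsingleton := by
  intro u hu v hv
  wlog hle : u.length ≤ v.length generalizing u v
  · exact (this hv hu (le_of_not_ge hle)).symm
  have hvx := prefix_of_mem_palindromicFactors_cons_sdiff hv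
  have huv : u <+: v :=
    List.prefix_of_prefix_length_le (prefix_of_mem_palindromicFactors_cons_sdiff hu) hvx hle
  refine huv.eq_of_length (hle.eq_of_not_lt fun hlt ↦ hu.2 ⟨?_, hu.1.2⟩)
  simpa only [show u.reverse = u from hu.1.2] using
    hv.1.2.reverse_infix_of_prefix_cons hvx huv hlt

theorem ncard_palindromicFactors_cons_le (a : A) (x : List A) :
    (palindromicFactors (a :: x)).ncard ≤ (palindromicFactors x).ncard + 1 := by
  have hnew : (palindromicFactors (a :: x) \ palindromicFactors x).ncard ≤ 1 :=
    (Set.ncard_le_one ((finite_palindromicFactors _).subset Set.sdiff_subset)).2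
      fun _ hu _ hv ↦ subsingleton_palindromicFactors_cons_sdiff a x hu hv
  have := Set.ncard_le_ncard_sdiff_add_ncard (palindromicFactors (a :: x)) (palindromicFactors x)
    (finite_palindromicFactors x)
  omega

theorem ncard_palindromicFactors_le (w : List A) :
    (palindromicFactors w).ncard ≤ w.length + 1 := by
  induction w with
  | nil =>
    have : palindromicFactors ([] : List A) ⊆ {[]} := fun _ hu ↦ List.infix_nil.1 hu.1
    simpa using Set.ncard_le_ncard this
  | cons a x ih =>
    exact (ncard_palindromicFactors_cons_le a x).trans (Nat.add_le_add_right ih 1)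

theorem IsRichWord.of_cons {a : A} {x : List A} (hw : IsRichWord (a :: x)) : IsRichWord x := by
  have hcons : (palindromicFactors (a :: x)).ncard = x.length + 1 + 1 := hw
  have := ncard_palindromicFactors_cons_le a x
  exact (ncard_palindromicFactors_le x).antisymm (by omega)

theorem IsRichWord.exists_mem_palindromicFactors_cons_sdiff {a : A} {x : List A}
    (hw : IsRichWord (a :: x)) :
    ∃ u, u ∈ palindromicFactors (a :: x) \ palindromicFactors x := by
  refine Set.sdiff_nonempty.2 fun hsub ↦ ?_
  have hcons : (palindromicFactors (a :: x)).ncard = x.length + 1 + 1 := hw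
  have := Set.ncard_le_ncard hsub (finite_palindromicFactors x)
  have := ncard_palindromicFactors_le x
  omega

theorem ncard_factorsUpToReversal_cons_le (a : A) (x : List A) (m : ℕ) :
    (factorsUpToReversal (a :: x) m).ncard ≤ (factorsUpToReversal x m).ncard + 2 := by
  set p := (a :: x).take m with hp
  have hsub : factorsUpToReversal (a :: x) m ⊆
      insert p (insert p.reverse (factorsUpToReversal x m)) := by
    have eq_take {v : List A} (hv : v.length = m) (h : v <+: a :: x) : v = p := by
      rw [hp, ← hv, ← List.prefix_iff_eq_take]
      exact h
    rintro v ⟨hv, h | h⟩ <;> rcases List.infix_cons_iff.1 h with h | h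
    · exact .inl (eq_take hv h)
    · exact .inr (.inr ⟨hv, .inl h⟩)
    · exact .inr (.inl (List.reverse_eq_iff.1 (eq_take (v.length_reverse.trans hv) h)))
    · exact .inr (.inr ⟨hv, .inr h⟩)
  calc (factorsUpToReversal (a :: x) m).ncard
      ≤ (insert p (insert p.reverse (factorsUpToReversal x m))).ncard :=
        Set.ncard_le_ncard hsub (((finite_factorsUpToReversal x m).insert _).insert _)
    _ ≤ (insert p.reverse (factorsUpToReversal x m)).ncard + 1 := Set.ncard_insert_le ..
    _ ≤ (factorsUpToReversal x m).ncard + 2 := Nat.add_le_add_right (Set.ncard_insert_le ..) 1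

theorem IsPalindrome.factorsUpToReversal_cons_subset {a : A} {x u : List A} {m : ℕ}
    (hu : IsPalindrome u) (hux : u <+: a :: x) (hm : m < u.length) :
    factorsUpToReversal (a :: x) m ⊆ factorsUpToReversal x m := by
  have reverse_infix {v : List A} (hv : v.length = m) (h : v <+: a :: x) : v.reverse <:+: x :=
    hu.reverse_infix_of_prefix_cons hux
      (List.prefix_of_prefix_length_le h hux (hv.trans_le hm.le)) (hv.trans_lt hm)
  rintro v ⟨hv, h | h⟩ <;> rcases List.infix_cons_iff.1 h with h | h
  · exact ⟨hv, .inr (reverse_infix hv h)⟩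
  · exact ⟨hv, .inl h⟩
  · exact ⟨hv, .inl (v.reverse_reverse ▸ reverse_infix (v.length_reverse.trans hv) h)⟩
  · exact ⟨hv, .inr h⟩

theorem ncard_shortPalindromicFactors_lt_cons {a : A} {x u : List A} {m : ℕ}
    (hu : u ∈ palindromicFactors (a :: x) \ palindromicFactors x) (hm : u.length ≤ m) :
    (shortPalindromicFactors x m).ncard < (shortPalindromicFactors (a :: x) m).ncard :=
  Set.ncard_lt_ncard ((shortPalindromicFactors_subset_cons a x m).ssubset_of_mem_notMem
    ⟨hu.1, hm⟩ fun h ↦ hu.2 h.1) (finite_shortPalindromicFactors _ m)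

theorem IsRichWord.ncard_factorsUpToReversal_le {w : List A} (hw : IsRichWord w) (m : ℕ) :
    (factorsUpToReversal w m).ncard ≤ 2 * (shortPalindromicFactors w m).ncard := by
  induction w with
  | nil =>
    have hfactors : factorsUpToReversal ([] : List A) m ⊆ {[]} := by
      rintro v ⟨_, h | h⟩ <;> simpa using h
    have hpos : 0 < (shortPalindromicFactors ([] : List A) m).ncard :=
      (Set.ncard_pos (finite_shortPalindromicFactors _ m)).2
        ⟨[], ⟨List.infix_rfl, rfl⟩, Nat.zero_le m⟩
    have := Set.ncard_le_ncard hfactors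
    rw [Set.ncard_singleton] at this
    omega
  | cons a x ih =>
    have ih := ih hw.of_cons
    obtain ⟨u, hu⟩ := hw.exists_mem_palindromicFactors_cons_sdiff
    rcases le_or_gt u.length m with hm | hm
    · have := ncard_factorsUpToReversal_cons_le a x m
      have := ncard_shortPalindromicFactors_lt_cons hu hm
      omega
    · have hux := prefix_of_mem_palindromicFactors_cons_sdiff hu
      calc (factorsUpToReversal (a :: x) m).ncard
          ≤ (factorsUpToReversal x m).ncard :=
            Set.ncard_le_ncard (hu.1.2.factorsUpToReversal_cons_subset hux hm)
              (finite_factorsUpToReversal x m)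
        _ ≤ 2 * (shortPalindromicFactors x m).ncard := ih
        _ ≤ 2 * (shortPalindromicFactors (a :: x) m).ncard :=
            Nat.mul_le_mul_left 2 (Set.ncard_le_ncard (shortPalindromicFactors_subset_cons a x m)
              (finite_shortPalindromicFactors _ m))

theorem ncard_palindromicFactors_length_eq_le (w : List A) (k : ℕ) :
    {u ∈ palindromicFactors w | u.length = k}.ncard ≤
      (factorsUpToReversal w ((k + 1) / 2)).ncard := by
  refine Set.ncard_le_ncard_of_injOn (List.take ((k + 1) / 2)) ?_ ?_
    (finite_factorsUpToReversal w _)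
  · rintro u ⟨⟨huw, -⟩, rfl⟩
    exact ⟨by rw [List.length_take]; omega, .inl ((List.take_prefix _ u).isInfix.trans huw)⟩
  · rintro u ⟨⟨-, hu⟩, hk⟩ v ⟨⟨-, hv⟩, hk'⟩ htake
    exact hu.eq_of_take_eq hv (hk.trans hk'.symm) (by omega) htake

theorem IsRichWord.ncard_shortPalindromicFactors_le_mul {w : List A} (hw : IsRichWord w) (n : ℕ) :
    (shortPalindromicFactors w n).ncard ≤
      (n + 1) * (2 * (shortPalindromicFactors w ((n + 1) / 2)).ncard) := by
  have hunion : shortPalindromicFactors w n =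
      ⋃ k ∈ Finset.range (n + 1), {u ∈ palindromicFactors w | u.length = k} := by
    ext u
    simp [shortPalindromicFactors, and_comm]
  have hlength : ∀ k ∈ Finset.range (n + 1), {u ∈ palindromicFactors w | u.length = k}.ncard ≤
      2 * (shortPalindromicFactors w ((n + 1) / 2)).ncard := by
    intro k hk
    have hkn : (k + 1) / 2 ≤ (n + 1) / 2 := by
      have := Finset.mem_range.1 hk
      omega
    calc {u ∈ palindromicFactors w | u.length = k}.ncard
        ≤ (factorsUpToReversal w ((k + 1) / 2)).ncard :=
          ncard_palindromicFactors_length_eq_le w k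
      _ ≤ 2 * (shortPalindromicFactors w ((k + 1) / 2)).ncard := hw.ncard_factorsUpToReversal_le _
      _ ≤ 2 * (shortPalindromicFactors w ((n + 1) / 2)).ncard :=
          Nat.mul_le_mul_left 2 (Set.ncard_le_ncard (shortPalindromicFactors_mono w hkn)
            (finite_shortPalindromicFactors w _))
  calc (shortPalindromicFactors w n).ncard
      ≤ ∑ k ∈ Finset.range (n + 1), {u ∈ palindromicFactors w | u.length = k}.ncard :=
        hunion ▸ Finset.set_ncard_biUnion_le _ _
    _ ≤ (Finset.range (n + 1)).card • (2 * (shortPalindromicFactors w ((n + 1) / 2)).ncard) :=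
        Finset.sum_le_card_nsmul _ _ _ hlength
    _ = (n + 1) * (2 * (shortPalindromicFactors w ((n + 1) / 2)).ncard) := by
        rw [Finset.card_range, smul_eq_mul]

theorem ncard_shortPalindromicFactors_one_le (w : List A) :
    (shortPalindromicFactors w 1).ncard ≤ {a | a ∈ w}.ncard + 1 := by
  have hfin : {a | a ∈ w}.Finite := w.finite_toSet
  have hsub : shortPalindromicFactors w 1 ⊆ insert [] ((fun a ↦ [a]) '' {a | a ∈ w}) := by
    rintro u ⟨⟨hu, -⟩, hlen⟩
    match u, hlen with
    | [], _ => exact .inl rfl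
    | [a], _ => exact .inr ⟨a, hu.subset (List.mem_singleton_self a), rfl⟩
  calc (shortPalindromicFactors w 1).ncard
      ≤ (insert [] ((fun a ↦ [a]) '' {a | a ∈ w})).ncard :=
        Set.ncard_le_ncard hsub ((hfin.image _).insert _)
    _ ≤ ((fun a ↦ [a]) '' {a | a ∈ w}).ncard + 1 := Set.ncard_insert_le ..
    _ ≤ {a | a ∈ w}.ncard + 1 := Nat.add_le_add_right (Set.ncard_image_le hfin) 1

theorem IsRichWord.ncard_shortPalindromicFactors_two_pow_le {w : List A} (hw : IsRichWord w)
    (k : ℕ) :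
    (shortPalindromicFactors w (2 ^ k)).ncard ≤ ({a | a ∈ w}.ncard + 1) * 2 ^ (3 * k ^ 2) := by
  induction k with
  | zero => simpa using ncard_shortPalindromicFactors_one_le w
  | succ k ih =>
    have hhalf : (2 ^ (k + 1) + 1) / 2 = 2 ^ k := by
      rw [pow_succ]
      omega
    have hsucc : 2 ^ (k + 1) + 1 ≤ 2 ^ (k + 2) := by
      have := Nat.one_le_two_pow (n := k + 1)
      rw [pow_succ 2 (k + 1)]
      omega
    calc (shortPalindromicFactors w (2 ^ (k + 1))).ncard
        ≤ (2 ^ (k + 1) + 1) * (2 * (shortPalindromicFactors w (2 ^ k)).ncard) :=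
          hhalf ▸ hw.ncard_shortPalindromicFactors_le_mul (2 ^ (k + 1))
      _ ≤ 2 ^ (k + 2) * (2 * (({a | a ∈ w}.ncard + 1) * 2 ^ (3 * k ^ 2))) := by gcongr
      _ = ({a | a ∈ w}.ncard + 1) * 2 ^ (k + 3 + 3 * k ^ 2) := by ring
      _ ≤ ({a | a ∈ w}.ncard + 1) * 2 ^ (3 * (k + 1) ^ 2) := by
          gcongr
          · exact one_le_two
          · nlinarith

theorem length_filter_lt_length_mul_le (ws : List (List A)) (m : ℕ) :
    (ws.filter (m < ·.length)).length * m ≤ ws.flatten.length := by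
  have hlong : ∀ i ∈ (ws.filter (m < ·.length)).map List.length, m ≤ i := by
    simp only [List.mem_map, List.mem_filter, decide_eq_true_eq]
    rintro _ ⟨u, ⟨-, hu⟩, rfl⟩
    exact hu.le
  calc (ws.filter (m < ·.length)).length * m
      ≤ ((ws.filter (m < ·.length)).map List.length).sum := by
        simpa only [List.length_map, smul_eq_mul] using List.card_nsmul_le_sum _ m hlong
    _ ≤ (ws.map List.length).sum :=
        (List.filter_sublist.map List.length).sum_le_sum fun _ _ ↦ Nat.zero_le _
    _ = ws.flatten.length := List.length_flatten.symm

theorem length_le_ncard_shortPalindromicFactors_add_div {ws : List (List A)} (hnd : ws.Nodup)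
    (hpal : ∀ u ∈ ws, IsPalindrome u) {m : ℕ} (hm : 0 < m) :
    ws.length ≤ (shortPalindromicFactors ws.flatten m).ncard + ws.flatten.length / m := by
  classical
  have hlong : (ws.filter (m < ·.length)).length ≤ ws.flatten.length / m :=
    (Nat.le_div_iff_mul_le hm).2 (length_filter_lt_length_mul_le ws m)
  have hshort : (ws.filter fun u ↦ !decide (m < u.length)).length ≤
      (shortPalindromicFactors ws.flatten m).ncard := by
    rw [← List.toFinset_card_of_nodup (hnd.filter _), ← Set.ncard_coe_finset]
    refine Set.ncard_le_ncard (fun u hu ↦ ?_) (finite_shortPalindromicFactors _ m)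
    obtain ⟨hu, hlen⟩ : u ∈ ws ∧ u.length ≤ m := by simpa using hu
    exact ⟨⟨List.infix_of_mem_flatten hu, hpal u hu⟩, hlen⟩
  have := List.length_eq_length_filter_add (l := ws) (m < ·.length)
  omega

theorem two_pow_mul_exp_le_of_le_div_three {k : ℕ} {s : ℝ} (hk : k ≤ s / 3) :
    2 ^ (3 * k ^ 2) * Real.exp (1 / 6 * s) ≤ 3 * Real.exp (s ^ 2) := by
  have hexponent : ((3 * k ^ 2 : ℕ) : ℝ) + 1 / 6 * s ≤ 1 + s ^ 2 := by
    push_cast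
    nlinarith [sq_nonneg (s - 1), k.cast_nonneg (α := ℝ)]
  calc 2 ^ (3 * k ^ 2) * Real.exp (1 / 6 * s)
      ≤ Real.exp 1 ^ (3 * k ^ 2) * Real.exp (1 / 6 * s) := by
        gcongr
        linarith [Real.exp_one_gt_d9]
    _ = Real.exp ((3 * k ^ 2 : ℕ) + 1 / 6 * s) := by rw [Real.exp_one_pow, Real.exp_add]
    _ ≤ Real.exp (1 + s ^ 2) := Real.exp_le_exp.2 hexponent
    _ = Real.exp 1 * Real.exp (s ^ 2) := Real.exp_add ..
    _ ≤ 3 * Real.exp (s ^ 2) := by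
        gcongr
        linarith [Real.exp_one_lt_d9]

theorem exp_le_two_pow_succ_of_div_three_lt {k : ℕ} {s : ℝ} (hk : s / 3 < k + 1) :
    Real.exp (1 / 6 * s) ≤ 2 ^ (k + 1) := by
  rw [← Real.log_le_log_iff (Real.exp_pos _) (by positivity), Real.log_exp, Real.log_pow]
  push_cast
  nlinarith [Real.log_two_gt_d9, k.cast_nonneg (α := ℝ)]

theorem le_mul_div_exp_sqrt_log {C N x : ℝ} (hC : 0 ≤ C) (hx : 1 ≤ x)
    (hN : ∀ k : ℕ, N ≤ C * 2 ^ (3 * k ^ 2) + x / 2 ^ k) :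
    N ≤ (3 * C + 2) * x / Real.exp (1 / 6 * √(Real.log x)) := by
  set s := √(Real.log x) with hs
  have hexp : Real.exp (s ^ 2) = x := by
    rw [hs, Real.sq_sqrt (Real.log_nonneg hx), Real.exp_log (by linarith)]
  set k := ⌊s / 3⌋₊
  have hshort := two_pow_mul_exp_le_of_le_div_three (Nat.floor_le (show 0 ≤ s / 3 by positivity))
  rw [hexp] at hshort
  have hlong := exp_le_two_pow_succ_of_div_three_lt (Nat.lt_floor_add_one (s / 3))
  rw [le_div_iff₀ (Real.exp_pos _)]
  calc N * Real.exp (1 / 6 * s)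
      ≤ (C * 2 ^ (3 * k ^ 2) + x / 2 ^ k) * Real.exp (1 / 6 * s) := by gcongr; exact hN k
    _ = C * (2 ^ (3 * k ^ 2) * Real.exp (1 / 6 * s)) + x / 2 ^ k * Real.exp (1 / 6 * s) := by ring
    _ ≤ C * (3 * x) + x / 2 ^ k * 2 ^ (k + 1) := by gcongr
    _ = (3 * C + 2) * x := by field_simp; ring

theorem statement0_general {w : List A} (hne : w ≠ []) (hw : IsRichWord w) {ws : List (List A)}
    (hnd : ws.Nodup) (hpal : ∀ u ∈ ws, IsPalindrome u) (hflat : w = ws.flatten) :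
    (ws.length : ℝ) ≤ (3 * ({a | a ∈ w}.ncard + 1) + 2) * w.length /
      Real.exp (1 / 6 * √(Real.log w.length)) := by
  refine le_mul_div_exp_sqrt_log (by positivity)
    (Nat.one_le_cast.2 (List.length_pos_iff.2 hne)) fun k ↦ ?_
  have hcount : ws.length ≤ (shortPalindromicFactors w (2 ^ k)).ncard + w.length / 2 ^ k :=
    hflat ▸ length_le_ncard_shortPalindromicFactors_add_div hnd hpal (Nat.two_pow_pos k)
  calc (ws.length : ℝ)
      ≤ (shortPalindromicFactors w (2 ^ k)).ncard + (w.length / 2 ^ k : ℕ) := mod_cast hcount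
    _ ≤ ({a | a ∈ w}.ncard + 1) * 2 ^ (3 * k ^ 2) + w.length / 2 ^ k := by
        gcongr
        · exact_mod_cast hw.ncard_shortPalindromicFactors_two_pow_le k
        · exact_mod_cast Nat.cast_div_le (α := ℝ) (m := w.length) (n := 2 ^ k)

end

/-- For a given finite alphabet `A`, there exist positive real constants `μ`, `π`
such that every finite nonempty rich word `w` over `A` with `n = |w|` satisfies
`LUF(w) ≤ μ * n / e^{π √(ln n)}`. -/
theorem statement0 (A : Type*) [Fintype A] :
    ∃ μ π : ℝ, 0 < μ ∧ 0 < π ∧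
      ∀ w : List A, w ≠ [] → IsRichWord w →
        ∀ ws : List (List A), IsUPSFactorization w ws →
          (ws.length : ℝ) ≤
            μ * (w.length : ℝ) / Real.exp (π * Real.sqrt (Real.log (w.length : ℝ))) := by
  refine ⟨3 * (Nat.card A + 1) + 2, 1 / 6, by positivity, by norm_num,
    fun w hne hw ws ⟨_, hnd, hpal, hflat, _⟩ ↦
      (statement0_general hne hw hnd (fun u hu ↦ (hpal u hu).2) hflat).trans ?_⟩
  gcongr
  exact Set.ncard_le_card _
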